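/- For real θ > 0 define U_θ^{(2)} on L²((0,∞)²,ℂ) by (U_θ^{(2)}f)(u₁,u₂) := f(ψ_θ(u₁),ψ_θ(u₂))·(ψ_θ'(u₁)·ψ_θ'(u₂))^{1/2}. Then U_θ^{(2)} is a unitary operator, and for every f ∈ C_c^∞((0,∞)²,ℂ) and all (u₁,u₂): U_θ^{(2)}( −Δ((U_θ^{(2)})^{-1}f) )(u₁,u₂) = Σ_{i=1,2} [ a_2(θ,u_i)·∂²_{u_i}f + a_1(θ,u_i)·∂_{u_i}f + a_0(θ,u_i)·f ](u₁,u₂), where Δ = ∂²_{u₁} + ∂²_{u₂}. In particular this equals −θ'·Δf(u₁,u₂) when u₁, u₂ > R, and equals −Δf(u₁,u₂) when u₁, u₂ < K. -/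

import Mathlib

open Set MeasureTheory
open scoped Topology ENNReal

/-! The half-density pullback `F ↦ √ψ' • F ∘ ψ` intertwines `d/dt` with the first order operator
`L = (ψ')⁻¹ (d/du - ψ'' / (2ψ'))`, so it turns `-d²/dt²` into `-L²`; expanding the square produces
the coefficients `a₂`, `a₁`, `a₀`. In the plane the two variables separate, because the factor of
the weight that belongs to one variable is constant along the other. Unitarity is the change of
variables formula: the square of the weight is the Jacobian of `ψ × ψ`. -/

section ConjugatedDerivative

variable {E : Type*} [NormedAddCommGroup E] [NormedSpace ℝ E] {ψ α : ℝ → ℝ} {F : ℝ → E} {u : ℝ}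

theorem deriv_deriv_const_smul {𝕜 R G : Type*} [NontriviallyNormedField 𝕜] [DivisionRing R]
    [NormedAddCommGroup G] [NormedSpace 𝕜 G] [Module R G] [SMulCommClass 𝕜 R G]
    [ContinuousConstSMul R G] (c : R) (g : 𝕜 → G) (t : 𝕜) :
    deriv (deriv fun s => c • g s) t = c • deriv (deriv g) t := by
  rw [funext fun s => deriv_fun_const_smul_field (x := s) c g, deriv_fun_const_smul_field]

theorem hasDerivAt_comp_leftInverse {𝕜 G : Type*} [NontriviallyNormedField 𝕜] [CompleteSpace 𝕜]
    [NormedAddCommGroup G] [NormedSpace 𝕜 G] {f g : 𝕜 → 𝕜} {F : 𝕜 → G} {f' a : 𝕜} {F' : G}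
    (hf : HasStrictDerivAt f f' a) (hf' : f' ≠ 0) (hg : ∀ᶠ x in 𝓝 a, g (f x) = x)
    (hF : HasDerivAt F F' a) : HasDerivAt (fun y => F (g y)) (f'⁻¹ • F') (f a) := by
  rw [← hg.self_of_nhds] at hF
  exact hF.scomp (f a) (hf.to_local_left_inverse hf' hg).hasDerivAt

theorem hasDerivAt_inv_sqrt_smul {p : ℝ → ℝ} {p' : ℝ} {F' : E} (hp : HasDerivAt p p' u)
    (hpos : 0 < p u) (hF : HasDerivAt F F' u) :
    HasDerivAt (fun v => (√(p v))⁻¹ • F v)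
      ((√(p u))⁻¹ • (F' - (p' / (2 * p u)) • F u)) u := by
  have hsqrt : √(p u) ≠ 0 := (Real.sqrt_pos.2 hpos).ne'
  refine (((hp.sqrt hpos.ne').fun_inv hsqrt).smul hF).congr_deriv ?_
  rw [Real.sq_sqrt hpos.le]
  match_scalars <;> field_simp

/-- The derivation `d/dt` on the target of a change of variables `t = ψ u`, transported to the
source by the half-density pullback `F ↦ √ψ' • F ∘ ψ`. -/
noncomputable def halfDensityDeriv (ψ : ℝ → ℝ) (F : ℝ → E) (u : ℝ) : E :=
  (deriv ψ u)⁻¹ • (deriv F u - (deriv (deriv ψ) u / (2 * deriv ψ u)) • F u)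

theorem contDiffAt_halfDensityDeriv (hψ : ContDiffAt ℝ 3 ψ u) (hpos : 0 < deriv ψ u)
    (hF : ContDiffAt ℝ 2 F u) : ContDiffAt ℝ 1 (halfDensityDeriv ψ F) u := by
  have hψ' : ContDiffAt ℝ 2 (deriv ψ) u := hψ.derivWithin (by norm_num)
  have hψ'' : ContDiffAt ℝ 1 (deriv (deriv ψ)) u := hψ'.derivWithin (by norm_num)
  have hF' : ContDiffAt ℝ 1 (deriv F) u := hF.derivWithin (by norm_num)
  have hψ'1 : ContDiffAt ℝ 1 (deriv ψ) u := hψ'.of_le (by norm_num)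
  have hF1 : ContDiffAt ℝ 1 F u := hF.of_le (by norm_num)
  exact (hψ'1.inv hpos.ne').smul (hF'.sub ((hψ''.div (contDiffAt_const.mul hψ'1)
    (by positivity)).smul hF1))

theorem hasDerivAt_inv_sqrt_deriv_smul_comp_leftInverse (hψ : ContDiffAt ℝ 2 ψ u)
    (hpos : 0 < deriv ψ u) (hα : ∀ᶠ v in 𝓝 u, α (ψ v) = v) (hF : DifferentiableAt ℝ F u) :
    HasDerivAt (fun t => (√(deriv ψ (α t)))⁻¹ • F (α t))
      ((√(deriv ψ u))⁻¹ • halfDensityDeriv ψ F u) (ψ u) := by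
  have hψ' : DifferentiableAt ℝ (deriv ψ) u :=
    (hψ.derivWithin (m := 1) (by norm_num)).differentiableAt one_ne_zero
  rw [halfDensityDeriv, smul_comm]
  exact hasDerivAt_comp_leftInverse (hψ.hasStrictDerivAt two_ne_zero) hpos.ne' hα
    (hasDerivAt_inv_sqrt_smul hψ'.hasDerivAt hpos hF.hasDerivAt)

theorem deriv_inv_sqrt_deriv_smul_comp_leftInverse_eventuallyEq (hψ : ContDiffAt ℝ 2 ψ u)
    (hpos : 0 < deriv ψ u) (hα : ∀ᶠ v in 𝓝 u, α (ψ v) = v) (hF : ContDiffAt ℝ 1 F u) :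
    deriv (fun t => (√(deriv ψ (α t)))⁻¹ • F (α t)) =ᶠ[𝓝 (ψ u)]
      fun t => (√(deriv ψ (α t)))⁻¹ • halfDensityDeriv ψ F (α t) := by
  have hψ' : ContinuousAt (deriv ψ) u :=
    (hψ.derivWithin (m := 1) (by norm_num)).continuousAt
  rw [Filter.EventuallyEq, ← (hψ.hasStrictDerivAt two_ne_zero).map_nhds_eq hpos.ne',
    Filter.eventually_map]
  filter_upwards [hψ.eventually (by simp), hψ'.eventually (lt_mem_nhds hpos),
    hα.eventually_nhds, hF.eventually (by simp)] with v hψv hposv hαv hFv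
  rw [hαv.self_of_nhds]
  exact (hasDerivAt_inv_sqrt_deriv_smul_comp_leftInverse hψv hposv hαv
    (hFv.differentiableAt one_ne_zero)).deriv

/-- The coefficient of the second derivative (the `a₂` of the paper) in the operator
`-(halfDensityDeriv ψ)²`, which is `-d²/dt²` conjugated by the dilation `ψ`. -/
noncomputable def dilationCoeff₂ (ψ : ℝ → ℝ) (u : ℝ) : ℝ := -(1 / deriv ψ u ^ 2)

/-- The coefficient of the first derivative (the `a₁` of the paper) in `-(halfDensityDeriv ψ)²`. -/
noncomputable def dilationCoeff₁ (ψ : ℝ → ℝ) (u : ℝ) : ℝ :=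
  2 * deriv (deriv ψ) u / deriv ψ u ^ 3

/-- The coefficient of the zeroth order term (the `a₀` of the paper) in `-(halfDensityDeriv ψ)²`. -/
noncomputable def dilationCoeff₀ (ψ : ℝ → ℝ) (u : ℝ) : ℝ :=
  (1 / 2) * deriv (deriv (deriv ψ)) u / deriv ψ u ^ 3
    - (5 / 4) * deriv (deriv ψ) u ^ 2 / deriv ψ u ^ 4

theorem halfDensityDeriv_halfDensityDeriv (hψ : ContDiffAt ℝ 3 ψ u) (hpos : 0 < deriv ψ u)
    (hF : ContDiffAt ℝ 2 F u) :
    halfDensityDeriv ψ (halfDensityDeriv ψ F) u =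
      -(dilationCoeff₂ ψ u • deriv (deriv F) u + dilationCoeff₁ ψ u • deriv F u
        + dilationCoeff₀ ψ u • F u) := by
  have hψ' : ContDiffAt ℝ 2 (deriv ψ) u := hψ.derivWithin (by norm_num)
  have hψ'' : ContDiffAt ℝ 1 (deriv (deriv ψ)) u := hψ'.derivWithin (by norm_num)
  have hF' : ContDiffAt ℝ 1 (deriv F) u := hF.derivWithin (by norm_num)
  have d₁ := (hψ'.differentiableAt two_ne_zero).hasDerivAt
  have d₂ := (hψ''.differentiableAt one_ne_zero).hasDerivAt
  have dF := (hF.differentiableAt two_ne_zero).hasDerivAt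
  have dF' := (hF'.differentiableAt one_ne_zero).hasDerivAt
  have hderiv : deriv (halfDensityDeriv ψ F) u = _ :=
    ((d₁.fun_inv hpos.ne').fun_smul (dF'.fun_sub
      ((d₂.fun_div (d₁.const_mul 2) (by positivity)).fun_smul dF))).deriv
  rw [halfDensityDeriv, hderiv, halfDensityDeriv, dilationCoeff₂, dilationCoeff₁, dilationCoeff₀]
  match_scalars <;> field_simp <;> ring

theorem deriv_deriv_inv_sqrt_deriv_smul_comp_leftInverse (hψ : ContDiffAt ℝ 3 ψ u)
    (hpos : 0 < deriv ψ u) (hα : ∀ᶠ v in 𝓝 u, α (ψ v) = v) (hF : ContDiffAt ℝ 2 F u) :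
    deriv (deriv fun t => (√(deriv ψ (α t)))⁻¹ • F (α t)) (ψ u) =
      -((√(deriv ψ u))⁻¹ • (dilationCoeff₂ ψ u • deriv (deriv F) u
        + dilationCoeff₁ ψ u • deriv F u + dilationCoeff₀ ψ u • F u)) := by
  have hψ₂ : ContDiffAt ℝ 2 ψ u := hψ.of_le (by norm_num)
  rw [(deriv_inv_sqrt_deriv_smul_comp_leftInverse_eventuallyEq hψ₂ hpos hα
      (hF.of_le (by norm_num))).deriv_eq,
    (hasDerivAt_inv_sqrt_deriv_smul_comp_leftInverse hψ₂ hpos hα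
      ((contDiffAt_halfDensityDeriv hψ hpos hF).differentiableAt one_ne_zero)).deriv,
    halfDensityDeriv_halfDensityDeriv hψ hpos hF, smul_neg]

end ConjugatedDerivative

section WeightedComposition

variable {X Y 𝕜 E : Type*} [MeasurableSpace X] [MeasurableSpace Y] {μ : Measure X} {ν : Measure Y}
  [NormedField 𝕜] [NormedAddCommGroup E] [NormedSpace 𝕜 E] {p : ℝ≥0∞} {e : X → Y} {w : X → 𝕜}

theorem eLpNorm_smul_comp (hp₀ : p ≠ 0) (hp : p ≠ ∞) (hw : Measurable fun x => ‖w x‖ₑ)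
    (he : MeasurePreserving e (μ.withDensity fun x => ‖w x‖ₑ ^ p.toReal) ν) {f : Y → E}
    (hf : AEStronglyMeasurable f ν) :
    eLpNorm (fun x => w x • f (e x)) p μ = eLpNorm f p ν := by
  have hfin : ∀ᵐ x ∂μ, ‖w x‖ₑ ^ p.toReal < ∞ :=
    .of_forall fun _ => ENNReal.rpow_lt_top_of_nonneg p.toReal_nonneg enorm_ne_top
  rw [← eLpNorm_comp_measurePreserving hf he, eLpNorm_eq_lintegral_rpow_enorm_toReal hp₀ hp,
    eLpNorm_eq_lintegral_rpow_enorm_toReal hp₀ hp,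
    lintegral_withDensity_eq_lintegral_mul_non_measurable _ (hw.pow_const _) hfin]
  simp only [Pi.mul_apply, enorm_smul, ENNReal.mul_rpow_of_nonneg _ _ p.toReal_nonneg,
    Function.comp_apply]

theorem absolutelyContinuous_withDensity_enorm_rpow (hw : Measurable fun x => ‖w x‖ₑ)
    (hw₀ : ∀ᵐ x ∂μ, w x ≠ 0) (r : ℝ) : μ ≪ μ.withDensity fun x => ‖w x‖ₑ ^ r :=
  withDensity_absolutelyContinuous' (hw.pow_const _).aemeasurable <| hw₀.mono fun _ hx =>
    (ENNReal.rpow_pos (enorm_pos.2 hx) enorm_ne_top).ne'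

theorem exists_linearIsometry_smul_comp [Fact (1 ≤ p)] (hp : p ≠ ∞) (hw : StronglyMeasurable w)
    (hw₀ : ∀ᵐ x ∂μ, w x ≠ 0)
    (he : MeasurePreserving e (μ.withDensity fun x => ‖w x‖ₑ ^ p.toReal) ν) :
    ∃ U : Lp E p ν →ₗᵢ[𝕜] Lp E p μ, ∀ f : Lp E p ν, U f =ᵐ[μ] fun x => w x • f (e x) := by
  have hq : Measure.QuasiMeasurePreserving e μ ν := he.quasiMeasurePreserving.mono_left
    (absolutelyContinuous_withDensity_enorm_rpow hw.enorm hw₀ _)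
  have hnorm (f : Lp E p ν) : eLpNorm (fun x => w x • f (e x)) p μ = eLpNorm f p ν :=
    eLpNorm_smul_comp (zero_lt_one.trans_le Fact.out).ne' hp hw.enorm he
      (Lp.aestronglyMeasurable f)
  have hmem (f : Lp E p ν) : MemLp (fun x => w x • f (e x)) p μ :=
    ⟨hw.aestronglyMeasurable.smul ((Lp.aestronglyMeasurable f).comp_quasiMeasurePreserving hq),
      (hnorm f).trans_lt (Lp.eLpNorm_lt_top f)⟩
  refine ⟨⟨⟨⟨fun f => (hmem f).toLp, fun f g => Lp.ext ?_⟩, fun c f => Lp.ext ?_⟩,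
    fun f => ?_⟩, fun f => (hmem f).coeFn_toLp⟩
  · filter_upwards [(hmem (f + g)).coeFn_toLp, (hmem f).coeFn_toLp, (hmem g).coeFn_toLp,
      Lp.coeFn_add (hmem f).toLp (hmem g).toLp, hq.ae (Lp.coeFn_add f g)]
      with x hfg hf hg hadd hcomp
    rw [hfg, hadd, Pi.add_apply, hf, hg, hcomp, Pi.add_apply, smul_add]
  · filter_upwards [(hmem (c • f)).coeFn_toLp, (hmem f).coeFn_toLp,
      Lp.coeFn_smul c (hmem f).toLp, hq.ae (Lp.coeFn_smul c f)] with x hcf hf hsmul hcomp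
    rw [hcf, RingHom.id_apply, hsmul, Pi.smul_apply, hf, hcomp, Pi.smul_apply, smul_comm]
  · exact (Lp.norm_toLp _ (hmem f)).trans (congrArg ENNReal.toReal (hnorm f))

theorem exists_linearIsometryEquiv_smul_comp [Fact (1 ≤ p)] (hp : p ≠ ∞)
    (hw : StronglyMeasurable w) (hw₀ : ∀ᵐ x ∂μ, w x ≠ 0) {e : X ≃ᵐ Y}
    (he : MeasurePreserving e (μ.withDensity fun x => ‖w x‖ₑ ^ p.toReal) ν) :
    ∃ U : Lp E p ν ≃ₗᵢ[𝕜] Lp E p μ, ∀ f : Lp E p ν, U f =ᵐ[μ] fun x => w x • f (e x) := by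
  obtain ⟨U, hU⟩ := exists_linearIsometry_smul_comp (E := E) hp hw hw₀ he
  have hq : Measure.QuasiMeasurePreserving e μ ν := he.quasiMeasurePreserving.mono_left
    (absolutelyContinuous_withDensity_enorm_rpow hw.enorm hw₀ _)
  have hq_symm : Measure.QuasiMeasurePreserving e.symm ν μ :=
    (he.symm e).quasiMeasurePreserving.mono_right (withDensity_absolutelyContinuous _ _)
  have hsurj : Function.Surjective U := by
    intro g
    have hmeas : AEStronglyMeasurable (fun y => (w (e.symm y))⁻¹ • g (e.symm y)) ν :=
      (hw.inv₀.aestronglyMeasurable.smul (Lp.aestronglyMeasurable g)).comp_quasiMeasurePreserving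
        hq_symm
    have hcancel : (fun x => w x • (w (e.symm (e x)))⁻¹ • g (e.symm (e x))) =ᵐ[μ] g := by
      filter_upwards [hw₀] with x hx
      rw [e.symm_apply_apply, smul_inv_smul₀ hx]
    have hmem : MemLp (fun y => (w (e.symm y))⁻¹ • g (e.symm y)) p ν := by
      refine ⟨hmeas, ?_⟩
      rw [← eLpNorm_smul_comp (zero_lt_one.trans_le Fact.out).ne' hp hw.enorm he hmeas,
        eLpNorm_congr_ae hcancel]
      exact Lp.eLpNorm_lt_top g
    refine ⟨hmem.toLp, Lp.ext ?_⟩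
    filter_upwards [hU hmem.toLp, hq.ae hmem.coeFn_toLp, hcancel] with x hUx hx hcancelx
    rw [hUx, hx, hcancelx]
  exact ⟨.ofSurjective U hsurj, hU⟩

end WeightedComposition

section HalfLine

theorem exists_orderIso_eqOn_Ioi {β : Type*} [LinearOrder β] {ψ : β → β} {a : β}
    (hmono : StrictMonoOn ψ (Ioi a)) (himage : ψ '' Ioi a = Ioi a) :
    ∃ h : β ≃o β, EqOn h ψ (Ioi a) := by
  classical
  have hmaps : MapsTo ψ (Ioi a) (Ioi a) := fun u hu => himage ▸ mem_image_of_mem ψ hu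
  have hmono' : StrictMono ((Ioi a).piecewise ψ id) := by
    intro u v huv
    by_cases hu : u ∈ Ioi a
    · have hv : v ∈ Ioi a := lt_trans hu huv
      simpa only [piecewise_eq_of_mem _ _ _ hu, piecewise_eq_of_mem _ _ _ hv] using hmono hu hv huv
    · by_cases hv : v ∈ Ioi a
      · simpa only [piecewise_eq_of_notMem _ _ _ hu, piecewise_eq_of_mem _ _ _ hv] using!
          (not_lt.1 hu).trans_lt (hmaps hv)
      · simpa only [piecewise_eq_of_notMem _ _ _ hu, piecewise_eq_of_notMem _ _ _ hv] using! huv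
  have hsurj : Function.Surjective ((Ioi a).piecewise ψ id) := by
    intro y
    by_cases hy : y ∈ Ioi a
    · obtain ⟨u, hu, rfl⟩ := himage.symm ▸ hy
      exact ⟨u, piecewise_eq_of_mem _ _ _ hu⟩
    · exact ⟨y, piecewise_eq_of_notMem _ _ _ hy⟩
  exact ⟨hmono'.orderIsoOfSurjective _ hsurj, piecewise_eqOn _ _ _⟩

theorem map_withDensity_abs_deriv_eq_restrict_image {s : Set ℝ} (hs : MeasurableSet s)
    {ψ ψ' : ℝ → ℝ} (hψ : ∀ u ∈ s, HasDerivWithinAt ψ (ψ' u) s u) (hinj : InjOn ψ s) :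
    ((volume.restrict s).withDensity fun u => ENNReal.ofReal |ψ' u|).map ψ =
      volume.restrict (ψ '' s) := by
  simpa only [ContinuousLinearMap.det_toSpanSingleton] using
    map_withDensity_abs_det_fderiv_eq_addHaar volume hs.nullMeasurableSet
      (fun u hu => (hψ u hu).hasFDerivWithinAt) hinj

variable {ψ : ℝ → ℝ} {a : ℝ}

theorem strictMonoOn_Ioi_of_deriv_pos (hpos : ∀ u, a < u → 0 < deriv ψ u) :
    StrictMonoOn ψ (Ioi a) :=
  strictMonoOn_of_deriv_pos (convex_Ioi a)
    (fun u hu =>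
      (differentiableAt_of_deriv_ne_zero (hpos u hu).ne').continuousAt.continuousWithinAt)
    (by simpa only [interior_Ioi, mem_Ioi] using hpos)

theorem measurePreserving_withDensity_deriv (hpos : ∀ u, a < u → 0 < deriv ψ u)
    (himage : ψ '' Ioi a = Ioi a) {h : ℝ → ℝ} (hmeas : Measurable h) (hh : EqOn h ψ (Ioi a)) :
    MeasurePreserving h
      ((volume.restrict (Ioi a)).withDensity fun u => ENNReal.ofReal |deriv ψ u|)
      (volume.restrict (Ioi a)) := by
  refine ⟨hmeas, ?_⟩
  have hderiv : ∀ u ∈ Ioi a, HasDerivWithinAt h (deriv ψ u) (Ioi a) u := fun u hu =>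
    (differentiableAt_of_deriv_ne_zero (hpos u hu).ne').hasDerivAt.hasDerivWithinAt.congr hh
      (hh hu)
  have hinj : InjOn h (Ioi a) := (strictMonoOn_Ioi_of_deriv_pos hpos).injOn.congr hh.symm
  rw [map_withDensity_abs_deriv_eq_restrict_image measurableSet_Ioi hderiv hinj, hh.image_eq,
    himage]

end HalfLine

section PlanarDilation

/-- The Laplacian `∂₁² + ∂₂²` of the plane. The sup norm on `ℝ × ℝ` is not Euclidean, so this is
not Mathlib's `Laplacian`. -/
noncomputable def planarLaplacian (g : ℝ × ℝ → ℂ) (x : ℝ × ℝ) : ℂ :=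
  deriv (deriv fun t => g (t, x.2)) x.1 + deriv (deriv fun t => g (x.1, t)) x.2

/-- The operator `U f = (f ∘ (ψ × ψ)) · √(ψ' ⊗ ψ')` on functions of two variables. -/
noncomputable def dilation (ψ : ℝ → ℝ) (f : ℝ × ℝ → ℂ) (x : ℝ × ℝ) : ℂ :=
  f (ψ x.1, ψ x.2) * (√(deriv ψ x.1 * deriv ψ x.2) : ℝ)

/-- The inverse of `dilation ψ`, written with an inverse function `α` of `ψ`. -/
noncomputable def dilationInv (ψ α : ℝ → ℝ) (f : ℝ × ℝ → ℂ) (y : ℝ × ℝ) : ℂ :=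
  f (α y.1, α y.2) * ((√(deriv ψ (α y.1) * deriv ψ (α y.2)))⁻¹ : ℝ)

/-- The second order operator into which `dilation ψ` conjugates minus the Laplacian. -/
noncomputable def dilatedLaplacian (ψ : ℝ → ℝ) (f : ℝ × ℝ → ℂ) (x : ℝ × ℝ) : ℂ :=
  dilationCoeff₂ ψ x.1 * deriv (deriv fun t => f (t, x.2)) x.1
    + dilationCoeff₁ ψ x.1 * deriv (fun t => f (t, x.2)) x.1
    + dilationCoeff₀ ψ x.1 * f x
    + dilationCoeff₂ ψ x.2 * deriv (deriv fun t => f (x.1, t)) x.2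
    + dilationCoeff₁ ψ x.2 * deriv (fun t => f (x.1, t)) x.2
    + dilationCoeff₀ ψ x.2 * f x

variable {ψ α : ℝ → ℝ} {a : ℝ} {f : ℝ × ℝ → ℂ} {x : ℝ × ℝ}

theorem measurePreserving_prodMap_withDensity_deriv (hpos : ∀ u, a < u → 0 < deriv ψ u)
    (himage : ψ '' Ioi a = Ioi a) {h : ℝ → ℝ} (hmeas : Measurable h) (hh : EqOn h ψ (Ioi a)) :
    MeasurePreserving (Prod.map h h)
      (((volume : Measure (ℝ × ℝ)).restrict (Ioi a ×ˢ Ioi a)).withDensity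
        fun x => ‖((√(deriv ψ x.1 * deriv ψ x.2) : ℝ) : ℂ)‖ₑ ^ (2 : ℝ≥0∞).toReal)
      ((volume : Measure (ℝ × ℝ)).restrict (Ioi a ×ˢ Ioi a)) := by
  have hquadrant : MeasurableSet (Ioi a ×ˢ Ioi a) :=
    measurableSet_Ioi.prod measurableSet_Ioi
  have hdensity : Measurable fun u => ENNReal.ofReal |deriv ψ u| :=
    (measurable_deriv ψ).abs.ennreal_ofReal
  have hhalf := measurePreserving_withDensity_deriv hpos himage hmeas hh
  have hprod := hhalf.prod hhalf
  rw [prod_withDensity hdensity hdensity, Measure.prod_restrict,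
    ← Measure.volume_eq_prod] at hprod
  rwa [withDensity_congr_ae]
  filter_upwards [ae_restrict_mem hquadrant] with x ⟨hx₁, hx₂⟩
  have h₁ := (hpos _ hx₁).le
  have h₂ := (hpos _ hx₂).le
  rw [← ofReal_norm, Complex.norm_real, Real.norm_of_nonneg (Real.sqrt_nonneg _),
    ENNReal.toReal_ofNat, ENNReal.rpow_ofNat, ← ENNReal.ofReal_pow (Real.sqrt_nonneg _),
    Real.sq_sqrt (mul_nonneg h₁ h₂), abs_of_nonneg h₁, abs_of_nonneg h₂, ENNReal.ofReal_mul h₁]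

theorem exists_linearIsometryEquiv_dilation (hpos : ∀ u, a < u → 0 < deriv ψ u)
    (himage : ψ '' Ioi a = Ioi a) :
    ∃ U : Lp ℂ 2 ((volume : Measure (ℝ × ℝ)).restrict (Ioi a ×ˢ Ioi a)) ≃ₗᵢ[ℂ]
        Lp ℂ 2 ((volume : Measure (ℝ × ℝ)).restrict (Ioi a ×ˢ Ioi a)),
      ∀ f : Lp ℂ 2 ((volume : Measure (ℝ × ℝ)).restrict (Ioi a ×ˢ Ioi a)),
        U f =ᵐ[(volume : Measure (ℝ × ℝ)).restrict (Ioi a ×ˢ Ioi a)] dilation ψ f := by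
  have hquadrant : ∀ᵐ x ∂((volume : Measure (ℝ × ℝ)).restrict (Ioi a ×ˢ Ioi a)),
      x ∈ Ioi a ×ˢ Ioi a :=
    ae_restrict_mem (measurableSet_Ioi.prod measurableSet_Ioi)
  obtain ⟨h, hh⟩ := exists_orderIso_eqOn_Ioi (strictMonoOn_Ioi_of_deriv_pos hpos) himage
  let e : ℝ × ℝ ≃ᵐ ℝ × ℝ :=
    h.toHomeomorph.toMeasurableEquiv.prodCongr h.toHomeomorph.toMeasurableEquiv
  have hweight : Measurable fun x : ℝ × ℝ => ((√(deriv ψ x.1 * deriv ψ x.2) : ℝ) : ℂ) :=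
    (((measurable_deriv ψ).comp measurable_fst).mul
      ((measurable_deriv ψ).comp measurable_snd)).sqrt.complex_ofReal
  have hweight₀ : ∀ᵐ x ∂((volume : Measure (ℝ × ℝ)).restrict (Ioi a ×ˢ Ioi a)),
      ((√(deriv ψ x.1 * deriv ψ x.2) : ℝ) : ℂ) ≠ 0 := by
    filter_upwards [hquadrant] with x ⟨hx₁, hx₂⟩
    exact Complex.ofReal_ne_zero.2 (Real.sqrt_pos.2 (mul_pos (hpos _ hx₁) (hpos _ hx₂))).ne'
  obtain ⟨U, hU⟩ := exists_linearIsometryEquiv_smul_comp (E := ℂ) ENNReal.ofNat_ne_top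
    hweight.stronglyMeasurable hweight₀ (e := e)
    (measurePreserving_prodMap_withDensity_deriv hpos himage h.continuous.measurable hh)
  refine ⟨U, fun f => (hU f).trans ?_⟩
  filter_upwards [hquadrant] with x ⟨hx₁, hx₂⟩
  rw [dilation, ← hh hx₁, ← hh hx₂, smul_eq_mul, mul_comm]
  rfl

theorem dilation_neg_planarLaplacian_dilationInv
    (hψ₁ : ContDiffAt ℝ 3 ψ x.1) (hψ₂ : ContDiffAt ℝ 3 ψ x.2)
    (hpos₁ : 0 < deriv ψ x.1) (hpos₂ : 0 < deriv ψ x.2)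
    (hα₁ : ∀ᶠ v in 𝓝 x.1, α (ψ v) = v) (hα₂ : ∀ᶠ v in 𝓝 x.2, α (ψ v) = v)
    (hf : ContDiffAt ℝ 2 f x) :
    dilation ψ (-planarLaplacian (dilationInv ψ α f)) x = dilatedLaplacian ψ f x := by
  have hslice₁ : (fun t => dilationInv ψ α f (t, ψ x.2)) = fun t =>
      (√(deriv ψ x.2))⁻¹ • (√(deriv ψ (α t)))⁻¹ • f (α t, x.2) := by
    ext t
    simp only [dilationInv, hα₂.self_of_nhds, Real.sqrt_mul' _ hpos₂.le, mul_inv,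
      Complex.real_smul, Complex.ofReal_mul]
    ring
  have hslice₂ : (fun t => dilationInv ψ α f (ψ x.1, t)) = fun t =>
      (√(deriv ψ x.1))⁻¹ • (√(deriv ψ (α t)))⁻¹ • f (x.1, α t) := by
    ext t
    simp only [dilationInv, hα₁.self_of_nhds, Real.sqrt_mul hpos₁.le, mul_inv,
      Complex.real_smul, Complex.ofReal_mul]
    ring
  have hf₁ : ContDiffAt ℝ 2 (fun t => f (t, x.2)) x.1 :=
    ContDiffAt.comp x.1 hf (contDiffAt_id.prodMk contDiffAt_const)
  have hf₂ : ContDiffAt ℝ 2 (fun t => f (x.1, t)) x.2 :=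
    ContDiffAt.comp x.2 hf (contDiffAt_const.prodMk contDiffAt_id)
  have hsqrt₁ : (√(deriv ψ x.1) : ℂ) ≠ 0 := Complex.ofReal_ne_zero.2 (Real.sqrt_pos.2 hpos₁).ne'
  have hsqrt₂ : (√(deriv ψ x.2) : ℂ) ≠ 0 := Complex.ofReal_ne_zero.2 (Real.sqrt_pos.2 hpos₂).ne'
  rw [dilation, Pi.neg_apply, planarLaplacian, hslice₁, hslice₂, deriv_deriv_const_smul,
    deriv_deriv_const_smul,
    deriv_deriv_inv_sqrt_deriv_smul_comp_leftInverse (F := fun t => f (t, x.2)) hψ₁ hpos₁ hα₁ hf₁,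
    deriv_deriv_inv_sqrt_deriv_smul_comp_leftInverse (F := fun t => f (x.1, t)) hψ₂ hpos₂ hα₂ hf₂,
    dilatedLaplacian, Real.sqrt_mul hpos₁.le]
  simp only [Complex.real_smul, Complex.ofReal_mul, Complex.ofReal_inv]
  field_simp
  ring

theorem dilatedLaplacian_of_eventuallyEq_const_mul {c : ℝ} (h₁ : ψ =ᶠ[𝓝 x.1] (c * ·))
    (h₂ : ψ =ᶠ[𝓝 x.2] (c * ·)) :
    dilatedLaplacian ψ f x = -((1 / c ^ 2 : ℝ) * planarLaplacian f x) := by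
  have hcoeff {u : ℝ} (h : ψ =ᶠ[𝓝 u] (c * ·)) :
      dilationCoeff₂ ψ u = -(1 / c ^ 2) ∧ dilationCoeff₁ ψ u = 0 ∧ dilationCoeff₀ ψ u = 0 := by
    have hderiv : deriv ψ =ᶠ[𝓝 u] fun _ => c := by
      simpa only [deriv_const_mul_id'] using h.deriv
    have hderiv₂ : deriv (deriv ψ) =ᶠ[𝓝 u] fun _ => 0 := by
      simpa only [deriv_const'] using hderiv.deriv
    simp [dilationCoeff₂, dilationCoeff₁, dilationCoeff₀, hderiv.eq_of_nhds, hderiv₂.eq_of_nhds,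
      hderiv₂.deriv_eq]
  obtain ⟨a₂, a₁, a₀⟩ := hcoeff h₁
  obtain ⟨b₂, b₁, b₀⟩ := hcoeff h₂
  rw [dilatedLaplacian, a₂, a₁, a₀, b₂, b₁, b₀, planarLaplacian]
  push_cast
  ring

end PlanarDilation

section CutoffDilation

/-- The map `ψ_θ`: the identity where `φ = 0` and multiplication by `θ + 1` where `φ = 1`. -/
def cutoffDilation (φ : ℝ → ℝ) (θ u : ℝ) : ℝ := (φ u * θ + 1) * u

variable {φ : ℝ → ℝ} {θ : ℝ}

theorem deriv_cutoffDilation_pos {u : ℝ} (hφ : DifferentiableAt ℝ φ u) (hφ0 : 0 ≤ φ u)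
    (hφ' : 0 ≤ deriv φ u) (hθ : 0 ≤ θ) (hu : 0 < u) : 0 < deriv (cutoffDilation φ θ) u := by
  have hderiv : deriv (cutoffDilation φ θ) u = deriv φ u * θ * u + (φ u * θ + 1) * 1 :=
    (((hφ.hasDerivAt.mul_const θ).add_const 1).mul (hasDerivAt_id u)).deriv
  rw [hderiv]
  positivity

theorem cutoffDilation_image_Ioi (hφ : ContinuousOn φ (Ioi 0)) (hmono : MonotoneOn φ (Ioi 0))
    (hφ0 : ∀ u, 0 < u → 0 ≤ φ u) (hθ : 0 ≤ θ) : cutoffDilation φ θ '' Ioi 0 = Ioi 0 := by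
  have hfactor {u : ℝ} (hu : 0 < u) : 1 ≤ φ u * θ + 1 :=
    le_add_of_nonneg_left (mul_nonneg (hφ0 u hu) hθ)
  refine subset_antisymm (image_subset_iff.2 fun u hu =>
    mul_pos (zero_lt_one.trans_le (hfactor hu)) hu) fun y (hy : 0 < y) => ?_
  have hc : 1 ≤ φ y * θ + 1 := hfactor hy
  have hv : 0 < y / (φ y * θ + 1) := by positivity
  have hvy : y / (φ y * θ + 1) ≤ y := div_le_self hy.le hc
  have hlower : cutoffDilation φ θ (y / (φ y * θ + 1)) ≤ y := calc
    _ ≤ (φ y * θ + 1) * (y / (φ y * θ + 1)) := by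
      unfold cutoffDilation
      gcongr
      exact hmono hv hy hvy
    _ = y := by field_simp
  have hupper : y ≤ cutoffDilation φ θ y := le_mul_of_one_le_left hy.le hc
  have hcont : ContinuousOn (cutoffDilation φ θ) (Ioi 0) :=
    ((hφ.mul continuousOn_const).add continuousOn_const).mul continuousOn_id
  exact isPreconnected_Ioi.intermediate_value hv hy hcont ⟨hlower, hupper⟩

end CutoffDilation

theorem stmt_14_general {K R : ℝ} {φ : ℝ → ℝ} (hφ : ContDiffOn ℝ 3 φ (Ioi 0))
    (hφ0 : ∀ u, 0 < u → 0 ≤ φ u) (hφ' : ∀ u, 0 < u → 0 ≤ deriv φ u)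
    (hφK : ∀ u, u < K → φ u = 0) (hφR : ∀ u, R < u → φ u = 1) {θ : ℝ} (hθ : 0 ≤ θ)
    {α : ℝ → ℝ} (hα : LeftInvOn α (cutoffDilation φ θ) (Ioi 0)) :
    (∃ U : Lp ℂ 2 ((volume : Measure (ℝ × ℝ)).restrict (Ioi 0 ×ˢ Ioi 0)) ≃ₗᵢ[ℂ]
          Lp ℂ 2 ((volume : Measure (ℝ × ℝ)).restrict (Ioi 0 ×ˢ Ioi 0)),
      ∀ f : Lp ℂ 2 ((volume : Measure (ℝ × ℝ)).restrict (Ioi 0 ×ˢ Ioi 0)),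
        U f =ᵐ[(volume : Measure (ℝ × ℝ)).restrict (Ioi 0 ×ˢ Ioi 0)]
          dilation (cutoffDilation φ θ) f) ∧
    ∀ f : ℝ × ℝ → ℂ, ContDiffOn ℝ 2 f (Ioi 0 ×ˢ Ioi 0) → ∀ x : ℝ × ℝ, 0 < x.1 → 0 < x.2 →
      dilation (cutoffDilation φ θ)
          (-planarLaplacian (dilationInv (cutoffDilation φ θ) α f)) x =
        dilatedLaplacian (cutoffDilation φ θ) f x ∧
      (R < x.1 → R < x.2 →
        dilation (cutoffDilation φ θ)
            (-planarLaplacian (dilationInv (cutoffDilation φ θ) α f)) x =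
          -((1 / (θ + 1) ^ 2 : ℝ) * planarLaplacian f x)) ∧
      (x.1 < K → x.2 < K →
        dilation (cutoffDilation φ θ)
            (-planarLaplacian (dilationInv (cutoffDilation φ θ) α f)) x =
          -planarLaplacian f x) := by
  have hφat {u : ℝ} (hu : 0 < u) : ContDiffAt ℝ 3 φ u := hφ.contDiffAt (Ioi_mem_nhds hu)
  have hmono : MonotoneOn φ (Ioi 0) := monotoneOn_of_deriv_nonneg (convex_Ioi 0) hφ.continuousOn
    (by simpa only [interior_Ioi] using hφ.differentiableOn three_ne_zero)
    (by simpa only [interior_Ioi, mem_Ioi] using hφ')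
  have hpos (u : ℝ) (hu : 0 < u) : 0 < deriv (cutoffDilation φ θ) u :=
    deriv_cutoffDilation_pos ((hφat hu).differentiableAt three_ne_zero) (hφ0 u hu) (hφ' u hu) hθ hu
  have hψat {u : ℝ} (hu : 0 < u) : ContDiffAt ℝ 3 (cutoffDilation φ θ) u :=
    (((hφat hu).mul contDiffAt_const).add contDiffAt_const).mul contDiffAt_id
  have hαat {u : ℝ} (hu : 0 < u) : ∀ᶠ v in 𝓝 u, α (cutoffDilation φ θ v) = v :=
    Filter.mem_of_superset (Ioi_mem_nhds hu) hα
  have hK {u : ℝ} (hu : u < K) : cutoffDilation φ θ =ᶠ[𝓝 u] (1 * ·) := by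
    filter_upwards [Iio_mem_nhds hu] with v hv
    rw [cutoffDilation, hφK v hv, zero_mul, zero_add]
  have hR {u : ℝ} (hu : R < u) : cutoffDilation φ θ =ᶠ[𝓝 u] ((θ + 1) * ·) := by
    filter_upwards [Ioi_mem_nhds hu] with v hv
    rw [cutoffDilation, hφR v hv, one_mul]
  refine ⟨exists_linearIsometryEquiv_dilation hpos
    (cutoffDilation_image_Ioi hφ.continuousOn hmono hφ0 hθ), fun f hf x hx₁ hx₂ => ?_⟩
  rw [dilation_neg_planarLaplacian_dilationInv (hψat hx₁) (hψat hx₂) (hpos _ hx₁) (hpos _ hx₂)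
    (hαat hx₁) (hαat hx₂) (hf.contDiffAt (prod_mem_nhds (Ioi_mem_nhds hx₁) (Ioi_mem_nhds hx₂)))]
  refine ⟨rfl, fun h₁ h₂ => dilatedLaplacian_of_eventuallyEq_const_mul (hR h₁) (hR h₂),
    fun h₁ h₂ => ?_⟩
  simpa using dilatedLaplacian_of_eventuallyEq_const_mul (f := f) (hK h₁) (hK h₂)

/-- For real `θ > 0` the two-dimensional dilation
`(U_θ⁽²⁾f)(u₁,u₂) = f(ψ_θ(u₁),ψ_θ(u₂))·(ψ_θ'(u₁)ψ_θ'(u₂))^{1/2}` is a unitary operator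
on `L²((0,∞)²,ℂ)`, and for every `f ∈ C_c^∞((0,∞)²,ℂ)` and all `(u₁,u₂)`,
`U_θ⁽²⁾(−Δ((U_θ⁽²⁾)⁻¹f))(u₁,u₂) = Σᵢ [a₂(θ,uᵢ)∂²_{uᵢ}f + a₁(θ,uᵢ)∂_{uᵢ}f + a₀(θ,uᵢ)f](u₁,u₂)`.
In particular this equals `−θ'·Δf` when `u₁,u₂ > R` and `−Δf` when `u₁,u₂ < K`. -/
theorem stmt_14
    (K R : ℝ) (hK : 2 < K) (hKR : K < R)
    (φ : ℝ → ℝ) (hφ : ContDiff ℝ (⊤ : ℕ∞) φ)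
    (hφ0 : ∀ u, 0 ≤ φ u) (hφ1 : ∀ u, φ u ≤ 1)
    (hφ' : ∀ u, 0 ≤ deriv φ u)
    (hφK : ∀ u, u < K → φ u = 0)
    (hφR : ∀ u, R < u → φ u = 1)
    (θ : ℝ) (hθ : 0 < θ)
    (ψ α : ℝ → ℝ)
    (hψ : ∀ u, ψ u = (φ u * θ + 1) * u)
    (hbij : BijOn ψ (Ici (0 : ℝ)) (Ici (0 : ℝ)))
    (hα : InvOn α ψ (Ici (0 : ℝ)) (Ici (0 : ℝ)))
    (lap : (ℝ × ℝ → ℂ) → ℝ × ℝ → ℂ)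
    (hlap : ∀ g : ℝ × ℝ → ℂ, ∀ x : ℝ × ℝ,
      lap g x = deriv (deriv (fun t => g (t, x.2))) x.1
              + deriv (deriv (fun t => g (x.1, t))) x.2)
    (a₂ a₁ a₀ : ℝ → ℝ)
    (ha₂ : ∀ u, a₂ u = -(1 / (deriv ψ u) ^ 2))
    (ha₁ : ∀ u, a₁ u = 2 * deriv (deriv ψ) u / (deriv ψ u) ^ 3)
    (ha₀ : ∀ u, a₀ u = (1 / 2) * deriv (deriv (deriv ψ)) u / (deriv ψ u) ^ 3
      - (5 / 4) * (deriv (deriv ψ) u) ^ 2 / (deriv ψ u) ^ 4) :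
    (∃ U : Lp ℂ 2 ((volume : Measure (ℝ × ℝ)).restrict (Ioi 0 ×ˢ Ioi 0)) ≃ₗᵢ[ℂ]
          Lp ℂ 2 ((volume : Measure (ℝ × ℝ)).restrict (Ioi 0 ×ˢ Ioi 0)),
      ∀ f : Lp ℂ 2 ((volume : Measure (ℝ × ℝ)).restrict (Ioi 0 ×ˢ Ioi 0)),
        (U f : ℝ × ℝ → ℂ) =ᵐ[(volume : Measure (ℝ × ℝ)).restrict (Ioi 0 ×ˢ Ioi 0)]
          fun x : ℝ × ℝ => f (ψ x.1, ψ x.2)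
            * ((Real.sqrt (deriv ψ x.1 * deriv ψ x.2) : ℝ) : ℂ)) ∧
    (∀ f : ℝ × ℝ → ℂ, ContDiff ℝ (⊤ : ℕ∞) f → HasCompactSupport f →
      tsupport f ⊆ Ioi 0 ×ˢ Ioi 0 →
      ∀ x : ℝ × ℝ, 0 < x.1 → 0 < x.2 →
        ((-(lap (fun y : ℝ × ℝ => f (α y.1, α y.2)
              * (((Real.sqrt (deriv ψ (α y.1) * deriv ψ (α y.2)))⁻¹ : ℝ) : ℂ))
            (ψ x.1, ψ x.2)))
          * ((Real.sqrt (deriv ψ x.1 * deriv ψ x.2) : ℝ) : ℂ)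
         = ((a₂ x.1 : ℝ) : ℂ) * deriv (deriv (fun t => f (t, x.2))) x.1
           + ((a₁ x.1 : ℝ) : ℂ) * deriv (fun t => f (t, x.2)) x.1
           + ((a₀ x.1 : ℝ) : ℂ) * f x
           + ((a₂ x.2 : ℝ) : ℂ) * deriv (deriv (fun t => f (x.1, t))) x.2
           + ((a₁ x.2 : ℝ) : ℂ) * deriv (fun t => f (x.1, t)) x.2
           + ((a₀ x.2 : ℝ) : ℂ) * f x) ∧
        (R < x.1 → R < x.2 →
          (-(lap (fun y : ℝ × ℝ => f (α y.1, α y.2)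
                * (((Real.sqrt (deriv ψ (α y.1) * deriv ψ (α y.2)))⁻¹ : ℝ) : ℂ))
              (ψ x.1, ψ x.2)))
            * ((Real.sqrt (deriv ψ x.1 * deriv ψ x.2) : ℝ) : ℂ)
          = -(((1 / (θ + 1) ^ 2 : ℝ) : ℂ) * lap f x)) ∧
        (x.1 < K → x.2 < K →
          (-(lap (fun y : ℝ × ℝ => f (α y.1, α y.2)
                * (((Real.sqrt (deriv ψ (α y.1) * deriv ψ (α y.2)))⁻¹ : ℝ) : ℂ))
              (ψ x.1, ψ x.2)))
            * ((Real.sqrt (deriv ψ x.1 * deriv ψ x.2) : ℝ) : ℂ)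
          = -(lap f x))) := by
  obtain ⟨rfl, rfl, rfl, rfl, rfl⟩ : ψ = cutoffDilation φ θ ∧ lap = planarLaplacian ∧
      a₂ = dilationCoeff₂ ψ ∧ a₁ = dilationCoeff₁ ψ ∧ a₀ = dilationCoeff₀ ψ :=
    ⟨funext hψ, funext₂ hlap, funext ha₂, funext ha₁, funext ha₀⟩
  have general := stmt_14_general (contDiff_infty.1 hφ 3).contDiffOn (fun u _ => hφ0 u)
    (fun u _ => hφ' u) hφK hφR hθ.le (hα.1.mono Ioi_subset_Ici_self)
  exact ⟨general.1, fun f hf _ _ => general.2 f (contDiff_infty.1 hf 2).contDiffOn⟩
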